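/- arXiv:1501.03420 — 2 statements merged into one kernel-verified Lean document; each statement's English description precedes it below -/
import Mathlib

section
/- Let {a_n} be positive reals and {b_n} real with: (a) a_n → ∞; (b) ∑_{n≥0} 1/a_n² = ∞; (c) ∑_{n≥0} [ (a_{n+1}/a_n)² − 1 ]⁻ < ∞; (d) limsup_{n→∞} |b_n|/a_n < 2; (e) ∑_{n≥0} |b_{n+1} − b_n|/a_n < ∞. Then for every λ ∈ ℝ and every generalized eigenvector {u_n} associated with λ one has ∑_{n≥0} u_n² = ∞. -/
/-!
The recurrence reads `aₙ₊₁ uₙ₊₂ + aₙ uₙ = (lam - bₙ₊₁) uₙ₊₁`; multiplying it by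
`aₙ₊₁ uₙ₊₂ - aₙ uₙ` shows that the quadratic form
`Sₙ = aₙ² (uₙ² + uₙ₊₁²) - (lam - bₙ) aₙ uₙ uₙ₊₁` changes in one step by
`(aₙ₊₁² - aₙ²) uₙ₊₁² + (bₙ₊₁ - bₙ) aₙ uₙ uₙ₊₁`.
As soon as `|lam - bₙ| ≤ q aₙ` with `q < 2`, the form is comparable to `aₙ² (uₙ² + uₙ₊₁²)`, so it
loses at most a summable proportion of itself at each step and stays above some `δ > 0`.
Thus `uₙ² + uₙ₊₁²` is at least a constant times `1 / aₙ²`, which is not summable.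
-/

open Filter Topology

noncomputable section

/-- `u` is a generalized eigenvector of the Jacobi matrix `(a, b)` associated with `lam`:
`(u 0, u 1) ≠ (0, 0)` and `aₙ uₙ₊₁ = (lam − bₙ) uₙ − aₙ₋₁ uₙ₋₁` for all `n ≥ 1`. -/
def IsGenEig (a b : ℕ → ℝ) (lam : ℝ) (u : ℕ → ℝ) : Prop :=
  ¬(u 0 = 0 ∧ u 1 = 0) ∧
  ∀ n : ℕ, a (n + 1) * u (n + 2) = (lam - b (n + 1)) * u (n + 1) - a n * u n

lemma abs_mul_mul_le_half_mul_sq_add_sq {K : Type*} [Field K] [LinearOrder K]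
    [IsStrictOrderedRing K] {s p : K} (h : |s| ≤ p) (x y : K) :
    |s * x * y| ≤ p / 2 * (x ^ 2 + y ^ 2) := by
  have hp : 0 ≤ p := (abs_nonneg s).trans h
  have hxy : 2 * |x| * |y| ≤ x ^ 2 + y ^ 2 := by
    simpa only [sq_abs] using two_mul_le_add_sq |x| |y|
  calc |s * x * y| = |s| / 2 * (2 * |x| * |y|) := by rw [abs_mul, abs_mul]; ring
    _ ≤ p / 2 * (x ^ 2 + y ^ 2) := by gcongr

lemma one_sub_sum_range_mul_le {R : Type*} [CommRing R] [LinearOrder R] [IsStrictOrderedRing R]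
    {S r : ℕ → R} (hS : 0 ≤ S 0) (hr₀ : ∀ n, 0 ≤ r n) (hr₁ : ∀ n, r n ≤ 1)
    (hstep : ∀ n, (1 - r n) * S n ≤ S (n + 1)) (n : ℕ) :
    (1 - ∑ k ∈ Finset.range n, r k) * S 0 ≤ S n := by
  induction n with
  | zero => simp
  | succ n ih =>
    have hcross : 0 ≤ r n * (∑ k ∈ Finset.range n, r k) * S 0 :=
      mul_nonneg (mul_nonneg (hr₀ n) (Finset.sum_nonneg fun k _ => hr₀ k)) hS
    calc (1 - ∑ k ∈ Finset.range (n + 1), r k) * S 0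
        ≤ (1 - r n) * ((1 - ∑ k ∈ Finset.range n, r k) * S 0) := by
          rw [Finset.sum_range_succ]; linear_combination hcross
      _ ≤ (1 - r n) * S n := mul_le_mul_of_nonneg_left ih (sub_nonneg.2 (hr₁ n))
      _ ≤ S (n + 1) := hstep n

lemma exists_pos_eventually_le_of_one_sub_mul_le {S r : ℕ → ℝ} (hr₀ : ∀ n, 0 ≤ r n)
    (hr : Summable r) (hS : ∀ᶠ n in atTop, 0 < S n)
    (hstep : ∀ᶠ n in atTop, (1 - r n) * S n ≤ S (n + 1)) :
    ∃ δ > 0, ∀ᶠ n in atTop, δ ≤ S n := by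
  obtain ⟨N, hSN, htail, hstepN⟩ : ∃ N, 0 < S N ∧ ∑' k, r (k + N) < 1 / 2 ∧
      ∀ n ≥ N, (1 - r n) * S n ≤ S (n + 1) :=
    (hS.and (((tendsto_sum_nat_add r).eventually_lt_const one_half_pos).and
      (eventually_forall_ge_atTop.2 hstep))).exists
  have hrN : Summable fun k => r (k + N) := (summable_nat_add_iff N).2 hr
  have hpartial (n : ℕ) : ∑ k ∈ Finset.range n, r (k + N) ≤ 1 / 2 :=
    (hrN.sum_le_tsum _ fun _ _ => hr₀ _).trans htail.le
  have hterm (n : ℕ) : r (n + N) ≤ 1 := by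
    linarith [hrN.le_tsum n fun _ _ => hr₀ _]
  have hlower (n : ℕ) : (1 - ∑ k ∈ Finset.range n, r (k + N)) * S N ≤ S (n + N) := by
    simpa only [zero_add] using one_sub_sum_range_mul_le (S := fun k => S (k + N))
      (by simpa only [zero_add] using hSN.le) (fun k => hr₀ (k + N)) hterm
      (fun k => by simpa only [add_right_comm] using hstepN (k + N) (Nat.le_add_left N k)) n
  refine ⟨1 / 2 * S N, by positivity, eventually_atTop.2 ⟨N, fun n hn => ?_⟩⟩
  obtain ⟨k, rfl⟩ := Nat.exists_eq_add_of_le' hn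
  exact (mul_le_mul_of_nonneg_right (by linarith [hpartial k]) hSN.le).trans (hlower k)

/-- The squared norm of `(uₙ, uₙ₊₁)` weighted by `aₙ²`, against which `turanForm` is compared. -/
def weightedEnergy (a u : ℕ → ℝ) (n : ℕ) : ℝ :=
  a n ^ 2 * (u n ^ 2 + u (n + 1) ^ 2)

/-- The weighted Turán determinant `aₙ² uₙ² - aₙ₋₁ aₙ uₙ₋₁ uₙ₊₁` of a solution, whose growth
controls `uₙ² + uₙ₊₁²`. The recurrence is used to eliminate `aₙ₋₁ uₙ₋₁`, so that the definition
makes sense at `n = 0` and is a quadratic form in `(uₙ, uₙ₊₁)`. -/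
def turanForm (a b : ℕ → ℝ) (lam : ℝ) (u : ℕ → ℝ) (n : ℕ) : ℝ :=
  weightedEnergy a u n - (lam - b n) * a n * u n * u (n + 1)

/-- The proportion of `weightedEnergy a u n` that bounds the decrease of `turanForm a b lam u` from
`n` to `n + 1`: the relative decrease of `a²` plus the variation of `b` relative to `a`. -/
def lossRate (a b : ℕ → ℝ) (n : ℕ) : ℝ :=
  max (-((a (n + 1) / a n) ^ 2 - 1)) 0 + |b (n + 1) - b n| / a n

section

variable {a b u : ℕ → ℝ} {lam q : ℝ} {n : ℕ}

lemma lossRate_nonneg (ha : 0 ≤ a n) : 0 ≤ lossRate a b n :=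
  add_nonneg (le_max_right _ _) (div_nonneg (abs_nonneg _) ha)

lemma abs_turanForm_sub_weightedEnergy_le (ha : 0 ≤ a n) (hq : |lam - b n| ≤ q * a n) :
    |turanForm a b lam u n - weightedEnergy a u n| ≤ q / 2 * weightedEnergy a u n := by
  have hcoeff : |(lam - b n) * a n| ≤ q * a n * a n := by
    rw [abs_mul, abs_of_nonneg ha]
    exact mul_le_mul_of_nonneg_right hq ha
  calc |turanForm a b lam u n - weightedEnergy a u n|
      = |(lam - b n) * a n * u n * u (n + 1)| := by rw [turanForm, sub_sub_cancel_left, abs_neg]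
    _ ≤ q * a n * a n / 2 * (u n ^ 2 + u (n + 1) ^ 2) :=
        abs_mul_mul_le_half_mul_sq_add_sq hcoeff _ _
    _ = q / 2 * weightedEnergy a u n := by rw [weightedEnergy]; ring

lemma sq_sub_sq_succ_le_max_mul_sq (ha : a n ≠ 0) :
    a n ^ 2 - a (n + 1) ^ 2 ≤ max (-((a (n + 1) / a n) ^ 2 - 1)) 0 * a n ^ 2 :=
  calc a n ^ 2 - a (n + 1) ^ 2 = -((a (n + 1) / a n) ^ 2 - 1) * a n ^ 2 := by field_simp; ring
    _ ≤ max (-((a (n + 1) / a n) ^ 2 - 1)) 0 * a n ^ 2 := by gcongr; exact le_max_left _ _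

namespace IsGenEig

lemma sq_add_sq_pos (hu : IsGenEig a b lam u) (ha : ∀ n, a n ≠ 0) (n : ℕ) :
    0 < u n ^ 2 + u (n + 1) ^ 2 := by
  have hne : ¬(u n = 0 ∧ u (n + 1) = 0) := by
    induction n with
    | zero => exact hu.1
    | succ n ih =>
      rintro ⟨h₁, h₂⟩
      have hrec := hu.2 n
      rw [h₁, h₂, mul_zero, mul_zero, zero_sub, zero_eq_neg] at hrec
      exact ih ⟨(mul_eq_zero.1 hrec).resolve_left (ha n), h₁⟩
  rcases not_and_or.1 hne with h | h <;> positivity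

lemma weightedEnergy_pos (hu : IsGenEig a b lam u) (ha : ∀ n, a n ≠ 0) (n : ℕ) :
    0 < weightedEnergy a u n :=
  mul_pos (sq_pos_of_ne_zero (ha n)) (hu.sq_add_sq_pos ha n)

lemma turanForm_succ_sub (hu : IsGenEig a b lam u) (n : ℕ) :
    turanForm a b lam u (n + 1) - turanForm a b lam u n =
      (a (n + 1) ^ 2 - a n ^ 2) * u (n + 1) ^ 2 + (b (n + 1) - b n) * a n * u n * u (n + 1) := by
  unfold turanForm weightedEnergy
  linear_combination (a (n + 1) * u (n + 2) - a n * u n) * hu.2 n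

lemma turanForm_sub_lossRate_mul_le (hu : IsGenEig a b lam u) (ha : 0 < a n) :
    turanForm a b lam u n - lossRate a b n * weightedEnergy a u n ≤
      turanForm a b lam u (n + 1) := by
  set ρ := max (-((a (n + 1) / a n) ^ 2 - 1)) 0
  set β := |b (n + 1) - b n| / a n with hβ
  have hweight : (a n ^ 2 - a (n + 1) ^ 2) * u (n + 1) ^ 2 ≤ ρ * weightedEnergy a u n :=
    calc (a n ^ 2 - a (n + 1) ^ 2) * u (n + 1) ^ 2
        ≤ ρ * a n ^ 2 * (u n ^ 2 + u (n + 1) ^ 2) := by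
          have : 0 ≤ ρ := le_max_right _ _
          gcongr
          · exact sq_sub_sq_succ_le_max_mul_sq ha.ne'
          · exact le_add_of_nonneg_left (sq_nonneg _)
      _ = ρ * weightedEnergy a u n := mul_assoc _ _ _
  have hcross : |(b (n + 1) - b n) * a n * u n * u (n + 1)| ≤ β * weightedEnergy a u n := by
    have hcoeff : |(b (n + 1) - b n) * a n| ≤ β * a n ^ 2 := by
      rw [abs_mul, abs_of_pos ha, hβ]
      apply le_of_eq
      field_simp
    have hpos : 0 ≤ β * weightedEnergy a u n := by
      unfold weightedEnergy; positivity
    calc |(b (n + 1) - b n) * a n * u n * u (n + 1)|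
        ≤ β * a n ^ 2 / 2 * (u n ^ 2 + u (n + 1) ^ 2) :=
          abs_mul_mul_le_half_mul_sq_add_sq hcoeff _ _
      _ = β * weightedEnergy a u n / 2 := by rw [weightedEnergy]; ring
      _ ≤ β * weightedEnergy a u n := half_le_self hpos
  rw [lossRate, add_mul]
  linarith [hu.turanForm_succ_sub n, neg_le_of_abs_le hcross]

lemma exists_pos_eventually_le_weightedEnergy (hu : IsGenEig a b lam u) (ha : ∀ n, 0 < a n)
    (hq : q < 2) (hbound : ∀ᶠ n in atTop, |lam - b n| ≤ q * a n)
    (hloss : Summable (lossRate a b)) :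
    ∃ δ > 0, ∀ᶠ n in atTop, δ ≤ weightedEnergy a u n := by
  set c := 1 - q / 2 with hc
  have hc₀ : 0 < c := by linarith
  have hE := hu.weightedEnergy_pos fun n => (ha n).ne'
  have hcomp : ∀ᶠ n in atTop, c * weightedEnergy a u n ≤ turanForm a b lam u n ∧
      turanForm a b lam u n ≤ 2 * weightedEnergy a u n := by
    filter_upwards [hbound] with n hn
    have h := abs_le.1 (abs_turanForm_sub_weightedEnergy_le (u := u) (ha n).le hn)
    constructor <;> nlinarith [mul_pos hc₀ (hE n)]
  have hstep : ∀ᶠ n in atTop,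
      (1 - c⁻¹ * lossRate a b n) * turanForm a b lam u n ≤ turanForm a b lam u (n + 1) := by
    filter_upwards [hcomp] with n hn
    have hE_le : weightedEnergy a u n ≤ c⁻¹ * turanForm a b lam u n :=
      (le_inv_mul_iff₀ hc₀).2 hn.1
    calc (1 - c⁻¹ * lossRate a b n) * turanForm a b lam u n
        = turanForm a b lam u n - lossRate a b n * (c⁻¹ * turanForm a b lam u n) := by ring
      _ ≤ turanForm a b lam u n - lossRate a b n * weightedEnergy a u n := by
          gcongr; exact lossRate_nonneg (ha n).le
      _ ≤ turanForm a b lam u (n + 1) := hu.turanForm_sub_lossRate_mul_le (ha n)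
  obtain ⟨δ, hδ, hle⟩ := exists_pos_eventually_le_of_one_sub_mul_le
    (fun n => mul_nonneg (inv_nonneg.2 hc₀.le) (lossRate_nonneg (ha n).le))
    (hloss.mul_left c⁻¹) (hcomp.mono fun n hn => (mul_pos hc₀ (hE n)).trans_le hn.1) hstep
  refine ⟨δ / 2, half_pos hδ, ?_⟩
  filter_upwards [hle, hcomp] with n hn hn'
  linarith

end IsGenEig

lemma not_summable_sq_of_le_weightedEnergy {δ : ℝ} (hδ : 0 < δ)
    (hle : ∀ᶠ n in atTop, δ ≤ weightedEnergy a u n) (hdiv : ¬ Summable fun n => 1 / a n ^ 2) :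
    ¬ Summable fun n => u n ^ 2 := by
  intro hsum
  have hpair : Summable fun n => δ⁻¹ * (u n ^ 2 + u (n + 1) ^ 2) :=
    (hsum.add ((summable_nat_add_iff 1).2 hsum)).mul_left δ⁻¹
  refine hdiv (hpair.of_norm_bounded_eventually_nat ?_)
  filter_upwards [hle] with n hn
  rw [Real.norm_of_nonneg (by positivity)]
  refine div_le_of_le_mul₀ (sq_nonneg _) (by positivity) ?_
  calc 1 = δ⁻¹ * δ := (inv_mul_cancel₀ hδ.ne').symm
    _ ≤ δ⁻¹ * weightedEnergy a u n := by gcongr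
    _ = δ⁻¹ * (u n ^ 2 + u (n + 1) ^ 2) * a n ^ 2 := by rw [weightedEnergy]; ring

lemma exists_lt_eventually_abs_sub_le_mul {p : ℝ} (ha : Tendsto a atTop atTop)
    (hb : limsup (fun n => ((|b n| / a n : ℝ) : EReal)) atTop < (p : EReal)) (lam : ℝ) :
    ∃ q < p, ∀ᶠ n in atTop, |lam - b n| ≤ q * a n := by
  obtain ⟨q, hbq, hqp⟩ := EReal.lt_iff_exists_real_btwn.1 hb
  obtain ⟨q', hqq', hq'p⟩ := exists_between (EReal.coe_lt_coe_iff.1 hqp)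
  refine ⟨q', hq'p, ?_⟩
  filter_upwards [eventually_lt_of_limsup_lt hbq, ha.eventually_gt_atTop 0,
    (ha.const_mul_atTop (sub_pos.2 hqq')).eventually_ge_atTop |lam|] with n hbn han hlam
  have hbn' : |b n| ≤ q * a n := ((div_lt_iff₀ han).1 (EReal.coe_lt_coe_iff.1 hbn)).le
  calc |lam - b n| ≤ |lam| + |b n| := abs_sub _ _
    _ ≤ (q' - q) * a n + q * a n := add_le_add hlam hbn'
    _ = q' * a n := by ring

end

theorem genEigenvector_not_square_summable_sq_general
    {a b u : ℕ → ℝ} {lam q : ℝ} (ha : ∀ n, 0 < a n)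
    (hdiv : ¬ Summable fun n : ℕ => 1 / a n ^ 2)
    (hdecr : Summable fun n : ℕ => max (-((a (n + 1) / a n) ^ 2 - 1)) 0)
    (hq : q < 2) (hbound : ∀ᶠ n in atTop, |lam - b n| ≤ q * a n)
    (hvar : Summable fun n : ℕ => |b (n + 1) - b n| / a n) (hu : IsGenEig a b lam u) :
    ¬ Summable fun n => u n ^ 2 := by
  obtain ⟨δ, hδ, hle⟩ :=
    hu.exists_pos_eventually_le_weightedEnergy ha hq hbound (hdecr.add hvar)
  exact not_summable_sq_of_le_weightedEnergy hδ hle hdiv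

/-- Under conditions (a)–(e) of Corollary B, for every real `lam`, every generalized
eigenvector associated with `lam` fails to be square-summable. -/
theorem genEigenvector_not_square_summable_sq
    (a b : ℕ → ℝ) (ha : ∀ n, 0 < a n)
    (h1 : Tendsto a atTop atTop)
    (h2 : ¬ Summable fun n : ℕ => 1 / a n ^ 2)
    (h3 : Summable fun n : ℕ => max (-((a (n + 1) / a n) ^ 2 - 1)) 0)
    (h4 : limsup (fun n => ((|b n| / a n : ℝ) : EReal)) atTop < ((2 : ℝ) : EReal))
    (h5 : Summable fun n : ℕ => |b (n + 1) - b n| / a n) :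
    ∀ (lam : ℝ) (u : ℕ → ℝ), IsGenEig a b lam u → ¬ Summable fun n => u n ^ 2 := by
  intro lam u hu
  obtain ⟨q, hq, hbound⟩ := exists_lt_eventually_abs_sub_le_mul h1 h4 lam
  exact genEigenvector_not_square_summable_sq_general ha h2 h3 hq hbound h5 hu
end
end

section
/- Let C be a Jacobi matrix and λ ∈ ℝ. If every generalized eigenvector {u_n} associated with λ satisfies ∑_{n≥0} u_n² = ∞ (i.e., no generalized eigenvector belongs to ℓ²), then C is self-adjoint, λ is not an eigenvalue of C, and λ belongs to the spectrum σ(C). -/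
/-!
The self-adjointness part is Weyl's limit-point argument, by variation of constants. For `x, y` in
the maximal domain, Green's identity shows that `⟨Cx, y⟩ - ⟨x, Cy⟩` is the limit of the Wronskians
`aₙ (x̄ₙ₊₁ yₙ - x̄ₙ yₙ₊₁)`. If this limit is nonzero, Cramer's rule expands every solution `u` of
the three-term recurrence as `uₙ₊₁ = cₙ x̄ₙ₊₁ + dₙ yₙ₊₁`, where `cₙ, dₙ` are quotients of
Wronskians. The sum of the absolute values of the numerators grows at each step by at most a factor
`1 + tₙ`, with `tₙ` a product of ℓ² sequences, so it stays bounded by the discrete Grönwall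
inequality and `u ∈ ℓ²`. Hence a single solution outside ℓ² forces `C` to be symmetric on its
maximal domain, and testing against finitely supported sequences shows that the adjoint acts by the
same matrix.

If no generalized eigenvector is in ℓ², the only ℓ² solution of the recurrence is zero. This
excludes eigenvectors for `λ`, and also ℓ² solutions of `(C - λ) x = e₀`, because the recurrence
ignores the zeroth row; so `C - λ` is not onto.
-/

open Filter Topology

noncomputable section

/-- Membership in the weighted ℓ² space with weight `w`. -/
def MemL2w (w : ℕ → ℝ) (f : ℕ → ℂ) : Prop :=
  Summable fun n => w n * ‖f n‖ ^ 2

/-- The weighted ℓ² inner product. -/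
def innerW (w : ℕ → ℝ) (f g : ℕ → ℂ) : ℂ :=
  ∑' n, (w n : ℂ) * star (f n) * g n

/-- The formal tridiagonal action of the Jacobi matrix with off-diagonal entries `a`
and diagonal entries `b`:  `(Cx)₀ = b₀x₀ + a₀x₁`,
`(Cx)ₙ = aₙ₋₁xₙ₋₁ + bₙxₙ + aₙxₙ₊₁` for `n ≥ 1`. -/
def jacobiAct (a b : ℕ → ℝ) (x : ℕ → ℂ) : ℕ → ℂ
  | 0 => (b 0 : ℂ) * x 0 + (a 0 : ℂ) * x 1
  | n + 1 => (a n : ℂ) * x n + (b (n + 1) : ℂ) * x (n + 1) + (a (n + 1) : ℂ) * x (n + 2)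

/-- The maximal domain of the formal operator `T` inside the weighted ℓ² space. -/
def DomW (w : ℕ → ℝ) (T : (ℕ → ℂ) → ℕ → ℂ) : Set (ℕ → ℂ) :=
  {x | MemL2w w x ∧ MemL2w w (T x)}

/-- `T`, on its maximal domain in weighted ℓ², is self-adjoint:
the graph of the adjoint operator coincides with the graph of `T`. -/
def IsSelfAdjointW (w : ℕ → ℝ) (T : (ℕ → ℂ) → ℕ → ℂ) : Prop :=
  ∀ y z : ℕ → ℂ, MemL2w w y → MemL2w w z →
    ((∀ x ∈ DomW w T, innerW w (T x) y = innerW w x z) ↔ (y ∈ DomW w T ∧ T y = z))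

/-- The point spectrum (set of eigenvalues) of `T` on its maximal domain. -/
def eigenW (w : ℕ → ℝ) (T : (ℕ → ℂ) → ℕ → ℂ) : Set ℂ :=
  {l | ∃ x ∈ DomW w T, x ≠ 0 ∧ T x = fun n => l * x n}

/-- The spectrum of `T`: those `l` for which `T - l` is not a bijection from the maximal
domain onto the weighted ℓ² space (for a closed operator this is the usual spectrum). -/
def spectrumW (w : ℕ → ℝ) (T : (ℕ → ℂ) → ℕ → ℂ) : Set ℂ :=
  {l | ¬ ((∀ x ∈ DomW w T, T x = (fun n => l * x n) → x = 0) ∧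
          ∀ y : ℕ → ℂ, MemL2w w y → ∃ x ∈ DomW w T, (fun n => T x n - l * x n) = y)}

/-- The essential spectrum: the set of accumulation points of the spectrum. -/
def essSpectrumW (w : ℕ → ℝ) (T : (ℕ → ℂ) → ℕ → ℂ) : Set ℂ :=
  {z | AccPt z (𝓟 (spectrumW w T))}

open Asymptotics

/-! ### Square-summable sequences and a Grönwall bound -/

lemma memL2w_one_iff_memℓp {f : ℕ → ℂ} : MemL2w (fun _ => 1) f ↔ Memℓp f 2 := by
  simp [MemL2w, memℓp_gen_iff]

lemma memL2w_one_ofReal_iff {f : ℕ → ℝ} :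
    MemL2w (fun _ => 1) (fun n => (f n : ℂ)) ↔ Summable fun n => f n ^ 2 := by
  simp [MemL2w]

lemma summable_norm_mul_norm_of_memℓp_two {ι E F : Type*} [NormedAddCommGroup E]
    [NormedAddCommGroup F] {f : ι → E} {g : ι → F} (hf : Memℓp f 2) (hg : Memℓp g 2) :
    Summable fun i => ‖f i‖ * ‖g i‖ := by
  have hconj : (2 : ENNReal).toReal.HolderConjugate (2 : ENNReal).toReal := by
    simpa using Real.HolderConjugate.two_two
  let fNorm : lp (fun _ : ι => ℝ) 2 := ⟨fun i => ‖f i‖, memℓp_norm_iff.2 hf⟩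
  let gNorm : lp (fun _ : ι => ℝ) 2 := ⟨fun i => ‖g i‖, memℓp_norm_iff.2 hg⟩
  simpa only [fNorm, gNorm, norm_norm] using lp.summable_mul hconj fNorm gNorm

lemma summable_star_mul_of_memℓp_two {ι : Type*} {f g : ι → ℂ} (hf : Memℓp f 2)
    (hg : Memℓp g 2) : Summable fun i => star (f i) * g i :=
  .of_norm (by simpa using summable_norm_mul_norm_of_memℓp_two hf hg)

lemma memℓp_two_of_succ_isBigO {E F : Type*} [NormedAddCommGroup E] [NormedAddCommGroup F]
    {f : ℕ → E} {g : ℕ → F} (hg : Memℓp g 2)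
    (h : (fun n => f (n + 1)) =O[atTop] fun n => g (n + 1)) : Memℓp f 2 := by
  have hg' : Summable fun n => ‖g n‖ ^ 2 := by simpa using hg.summable (by simp)
  have hf : Summable fun n => ‖f n‖ ^ 2 := (summable_nat_add_iff 1).1 <|
    summable_of_isBigO_nat ((summable_nat_add_iff 1).2 hg') (h.norm_norm.pow 2)
  exact memℓp_gen (by simpa using hf)

lemma finite_support_of_eventually_eq_zero {E : Type*} [Zero E] {f : ℕ → E}
    (hf : ∀ᶠ n in atTop, f n = 0) : f.support.Finite := by
  rwa [← Nat.cofinite_eq_atTop, eventually_cofinite] at hf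

lemma isBigO_one_of_succ_le_one_add_mul {E t : ℕ → ℝ} (hE : ∀ n, 0 ≤ E n) (ht : ∀ n, 0 ≤ t n)
    (hsum : Summable t) (h : ∀ᶠ n in atTop, E (n + 1) ≤ (1 + t n) * E n) :
    E =O[atTop] fun _ => (1 : ℝ) := by
  obtain ⟨N, hN⟩ := eventually_atTop.1 h
  refine .of_bound (E N * Real.exp (∑' k, t k)) <| eventually_atTop.2 ⟨N, fun n hn => ?_⟩
  have gronwall := discrete_gronwall (b := 0) (hE N) (by simpa using hN) (fun n _ => ht n)
    (fun _ _ => le_rfl) hn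
  calc ‖E n‖ = E n := Real.norm_of_nonneg (hE n)
    _ ≤ E N * Real.exp (∑ k ∈ Finset.Ico N n, t k) := by simpa using gronwall
    _ ≤ E N * Real.exp (∑' k, t k) := by
      gcongr
      exacts [hE N, hsum.sum_le_tsum _ fun k _ => ht k]
    _ = E N * Real.exp (∑' k, t k) * ‖(1 : ℝ)‖ := by simp

/-! ### Green's formula -/

section

variable {a b : ℕ → ℝ} {x y : ℕ → ℂ}

/-- The bilinear discrete Wronskian of two sequences, the boundary term in Green's formula for
the Jacobi matrix with off-diagonal entries `a`. It carries no complex conjugation: the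
sesquilinear version is `wronskian a (star x) y`. -/
def wronskian (a : ℕ → ℝ) (x y : ℕ → ℂ) (n : ℕ) : ℂ :=
  a n * (x (n + 1) * y n - x n * y (n + 1))

lemma wronskian_succ (a b : ℕ → ℝ) (x y : ℕ → ℂ) (n : ℕ) :
    wronskian a x y (n + 1) = wronskian a x y n +
      (jacobiAct a b x (n + 1) * y (n + 1) - x (n + 1) * jacobiAct a b y (n + 1)) := by
  simp only [wronskian, jacobiAct]
  ring

lemma sum_jacobiAct_mul_sub_mul_jacobiAct (a b : ℕ → ℝ) (x y : ℕ → ℂ) (n : ℕ) :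
    ∑ k ∈ Finset.range (n + 1), (jacobiAct a b x k * y k - x k * jacobiAct a b y k) =
      wronskian a x y n := by
  induction n with
  | zero =>
    simp only [zero_add, Finset.sum_range_one, jacobiAct, wronskian]
    ring
  | succ n ih => rw [Finset.sum_range_succ, ih, wronskian_succ a b]

lemma jacobiAct_star (a b : ℕ → ℝ) (x : ℕ → ℂ) :
    jacobiAct a b (star x) = star (jacobiAct a b x) := by
  ext n
  cases n <;> simp [jacobiAct]

lemma tendsto_wronskian_star (hJx : Summable fun n => star (jacobiAct a b x n) * y n)
    (hJy : Summable fun n => star (x n) * jacobiAct a b y n) :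
    Tendsto (wronskian a (star x) y) atTop
      (𝓝 (innerW (fun _ => 1) (jacobiAct a b x) y - innerW (fun _ => 1) x (jacobiAct a b y))) := by
  have hsum := ((hJx.hasSum.sub hJy.hasSum).tendsto_sum_nat).comp (tendsto_add_atTop_nat 1)
  simp only [innerW, Complex.ofReal_one, one_mul]
  refine hsum.congr fun n => ?_
  simp only [← sum_jacobiAct_mul_sub_mul_jacobiAct a b, jacobiAct_star, Pi.star_apply,
    Function.comp_apply]

end

/-! ### The limit-point criterion -/

/-- `u` solves `C u = μ u` in every row except the zeroth. This is the recurrence of `IsGenEig`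
for complex `μ` and `u`, without the condition `(u 0, u 1) ≠ (0, 0)`. -/
def SatisfiesRecurrence (a b : ℕ → ℝ) (μ : ℂ) (u : ℕ → ℂ) : Prop :=
  ∀ n, jacobiAct a b u (n + 1) = μ * u (n + 1)

lemma norm_mul_norm_wronskian_le (a : ℕ → ℝ) (u x y : ℕ → ℂ) (n : ℕ) :
    ‖u (n + 1)‖ * ‖wronskian a x y n‖ ≤
      (‖wronskian a u x n‖ + ‖wronskian a u y n‖) * (‖x (n + 1)‖ + ‖y (n + 1)‖) := by
  have cramer : u (n + 1) * wronskian a x y n =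
      wronskian a u y n * x (n + 1) - wronskian a u x n * y (n + 1) := by
    simp only [wronskian]
    ring
  calc ‖u (n + 1)‖ * ‖wronskian a x y n‖
      = ‖wronskian a u y n * x (n + 1) - wronskian a u x n * y (n + 1)‖ := by
        rw [← norm_mul, cramer]
    _ ≤ ‖wronskian a u y n‖ * ‖x (n + 1)‖ + ‖wronskian a u x n‖ * ‖y (n + 1)‖ := by
        simpa only [norm_mul] using
          norm_sub_le (wronskian a u y n * x (n + 1)) (wronskian a u x n * y (n + 1))
    _ ≤ (‖wronskian a u x n‖ + ‖wronskian a u y n‖) * (‖x (n + 1)‖ + ‖y (n + 1)‖) := by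
        nlinarith only [mul_nonneg (norm_nonneg (wronskian a u x n)) (norm_nonneg (x (n + 1))),
          mul_nonneg (norm_nonneg (wronskian a u y n)) (norm_nonneg (y (n + 1)))]

lemma isBigO_of_tendsto_wronskian {a : ℕ → ℝ} {x y : ℕ → ℂ} {s : ℂ} (hs : s ≠ 0)
    (hW : Tendsto (wronskian a x y) atTop (𝓝 s)) (u : ℕ → ℂ) :
    (fun n => u (n + 1)) =O[atTop] fun n =>
      (‖wronskian a u x n‖ + ‖wronskian a u y n‖) * (‖x (n + 1)‖ + ‖y (n + 1)‖) := by
  have hδ : 0 < ‖s‖ / 2 := by positivity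
  have hbelow : ∀ᶠ n in atTop, ‖s‖ / 2 < ‖wronskian a x y n‖ :=
    hW.norm.eventually_const_lt (half_lt_self (norm_pos_iff.2 hs))
  refine .of_bound (‖s‖ / 2)⁻¹ (hbelow.mono fun n hn => ?_)
  rw [Real.norm_of_nonneg (by positivity), inv_mul_eq_div, le_div_iff₀ hδ]
  calc ‖u (n + 1)‖ * (‖s‖ / 2) ≤ ‖u (n + 1)‖ * ‖wronskian a x y n‖ := by gcongr
    _ ≤ _ := norm_mul_norm_wronskian_le a u x y n

namespace SatisfiesRecurrence

variable {a b : ℕ → ℝ} {μ : ℂ} {u x y : ℕ → ℂ}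

lemma norm_wronskian_succ_le (hu : SatisfiesRecurrence a b μ u) (y : ℕ → ℂ) (n : ℕ) :
    ‖wronskian a u y (n + 1)‖ ≤ ‖wronskian a u y n‖ +
      ‖u (n + 1)‖ * ‖jacobiAct a b y (n + 1) - μ * y (n + 1)‖ := by
  have hstep : wronskian a u y (n + 1) = wronskian a u y n -
      u (n + 1) * (jacobiAct a b y (n + 1) - μ * y (n + 1)) := by
    rw [wronskian_succ a b, hu n]
    ring
  rw [hstep, ← norm_mul]
  exact norm_sub_le _ _

lemma isBigO_one_wronskian (hu : SatisfiesRecurrence a b μ u)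
    (hx : Memℓp x 2) (hJx : Memℓp (jacobiAct a b x) 2)
    (hy : Memℓp y 2) (hJy : Memℓp (jacobiAct a b y) 2)
    {s : ℂ} (hs : s ≠ 0) (hW : Tendsto (wronskian a x y) atTop (𝓝 s)) :
    (fun n => ‖wronskian a u x n‖ + ‖wronskian a u y n‖) =O[atTop] fun _ => (1 : ℝ) := by
  let X n := ‖x n‖ + ‖y n‖
  let F n := ‖jacobiAct a b x n - μ * x n‖ + ‖jacobiAct a b y n - μ * y n‖
  have hX : Memℓp X 2 := (memℓp_norm_iff.2 hx).add (memℓp_norm_iff.2 hy)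
  have hF : Memℓp F 2 := (memℓp_norm_iff.2 (hJx.sub (hx.const_smul μ))).add
    (memℓp_norm_iff.2 (hJy.sub (hy.const_smul μ)))
  obtain ⟨c, hc, hu_le⟩ := (isBigO_of_tendsto_wronskian hs hW u).exists_nonneg
  have hXF : Summable fun n => c * (‖X (n + 1)‖ * ‖F (n + 1)‖) :=
    ((summable_nat_add_iff 1).2 (summable_norm_mul_norm_of_memℓp_two hX hF)).mul_left c
  refine isBigO_one_of_succ_le_one_add_mul (fun n => by positivity) (fun n => by positivity) hXF
    (hu_le.bound.mono fun n hn => ?_)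
  have hXn : ‖X (n + 1)‖ = X (n + 1) := Real.norm_of_nonneg (by positivity)
  have hFn : ‖F (n + 1)‖ = F (n + 1) := Real.norm_of_nonneg (by positivity)
  set E := ‖wronskian a u x n‖ + ‖wronskian a u y n‖ with hE
  have hun : ‖u (n + 1)‖ ≤ c * (E * X (n + 1)) := by
    rwa [Real.norm_of_nonneg (by positivity)] at hn
  calc ‖wronskian a u x (n + 1)‖ + ‖wronskian a u y (n + 1)‖
      ≤ E + ‖u (n + 1)‖ * F (n + 1) := by
        linarith only [hu.norm_wronskian_succ_le x n, hu.norm_wronskian_succ_le y n, hE,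
          mul_add ‖u (n + 1)‖ ‖jacobiAct a b x (n + 1) - μ * x (n + 1)‖
            ‖jacobiAct a b y (n + 1) - μ * y (n + 1)‖]
    _ ≤ E + c * (E * X (n + 1)) * F (n + 1) := by gcongr
    _ = (1 + c * (‖X (n + 1)‖ * ‖F (n + 1)‖)) * E := by
        rw [hXn, hFn]
        ring

lemma memℓp_of_tendsto_wronskian (hu : SatisfiesRecurrence a b μ u)
    (hx : Memℓp x 2) (hJx : Memℓp (jacobiAct a b x) 2)
    (hy : Memℓp y 2) (hJy : Memℓp (jacobiAct a b y) 2)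
    {s : ℂ} (hs : s ≠ 0) (hW : Tendsto (wronskian a x y) atTop (𝓝 s)) : Memℓp u 2 := by
  have hX : Memℓp (fun n => ‖x n‖ + ‖y n‖) 2 := (memℓp_norm_iff.2 hx).add (memℓp_norm_iff.2 hy)
  refine memℓp_two_of_succ_isBigO hX ((isBigO_of_tendsto_wronskian hs hW u).trans ?_)
  simpa only [one_mul] using
    (hu.isBigO_one_wronskian hx hJx hy hJy hs hW).mul (isBigO_refl _ atTop)

end SatisfiesRecurrence

lemma innerW_jacobiAct_comm_of_not_memL2w {a b : ℕ → ℝ} {μ : ℂ} {u x y : ℕ → ℂ}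
    (hu : SatisfiesRecurrence a b μ u) (hu2 : ¬ MemL2w (fun _ => 1) u)
    (hx : x ∈ DomW (fun _ => 1) (jacobiAct a b)) (hy : y ∈ DomW (fun _ => 1) (jacobiAct a b)) :
    innerW (fun _ => 1) (jacobiAct a b x) y = innerW (fun _ => 1) x (jacobiAct a b y) := by
  simp only [DomW, Set.mem_ofPred_eq, memL2w_one_iff_memℓp] at hu2 hx hy
  have hW := tendsto_wronskian_star (summable_star_mul_of_memℓp_two hx.2 hy.1)
    (summable_star_mul_of_memℓp_two hx.1 hy.2)
  by_contra hne
  have hJx : Memℓp (jacobiAct a b (star x)) 2 := by simpa only [jacobiAct_star] using hx.2.star_mem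
  exact hu2 (hu.memℓp_of_tendsto_wronskian hx.1.star_mem hJx hy.1 hy.2 (sub_ne_zero.2 hne) hW)

/-! ### The adjoint -/

lemma memL2w_one_of_eventually_eq_zero {x : ℕ → ℂ} (hx : ∀ᶠ n in atTop, x n = 0) :
    MemL2w (fun _ => 1) x :=
  memL2w_one_iff_memℓp.2 <|
    (memℓp_zero (finite_support_of_eventually_eq_zero hx)).of_exponent_ge zero_le

lemma jacobiAct_eventually_eq_zero (a b : ℕ → ℝ) {x : ℕ → ℂ} (hx : ∀ᶠ n in atTop, x n = 0) :
    ∀ᶠ n in atTop, jacobiAct a b x n = 0 := by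
  obtain ⟨N, hN⟩ := eventually_atTop.1 hx
  refine eventually_atTop.2 ⟨N + 1, fun n hn => ?_⟩
  obtain ⟨m, rfl⟩ := Nat.exists_eq_add_of_le' (Nat.one_le_of_lt hn)
  simp [jacobiAct, hN m (by lia), hN (m + 1) (by lia), hN (m + 2) (by lia)]

lemma mem_domW_jacobiAct_of_eventually_eq_zero (a b : ℕ → ℝ) {x : ℕ → ℂ}
    (hx : ∀ᶠ n in atTop, x n = 0) : x ∈ DomW (fun _ => 1) (jacobiAct a b) :=
  ⟨memL2w_one_of_eventually_eq_zero hx,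
    memL2w_one_of_eventually_eq_zero (jacobiAct_eventually_eq_zero a b hx)⟩

lemma innerW_jacobiAct_comm_of_eventually_eq_zero (a b : ℕ → ℝ) {x : ℕ → ℂ}
    (hx : ∀ᶠ n in atTop, x n = 0) (y : ℕ → ℂ) :
    innerW (fun _ => 1) (jacobiAct a b x) y = innerW (fun _ => 1) x (jacobiAct a b y) := by
  have hsum {f : ℕ → ℂ} (hf : ∀ᶠ n in atTop, f n = 0) (g : ℕ → ℂ) :
      Summable fun n => star (f n) * g n :=
    summable_of_hasFiniteSupport <|
      finite_support_of_eventually_eq_zero (hf.mono fun n hn => by simp [hn])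
  have hW := tendsto_wronskian_star (hsum (jacobiAct_eventually_eq_zero a b hx) y)
    (hsum hx (jacobiAct a b y))
  have hW_zero : wronskian a (star x) y =ᶠ[atTop] 0 := by
    filter_upwards [hx, (tendsto_add_atTop_nat 1).eventually hx] with n hn hn'
    simp [wronskian, hn, hn']
  exact sub_eq_zero.1 (tendsto_nhds_unique hW (tendsto_const_nhds.congr' hW_zero.symm))

lemma eventually_single_eq_zero {E : Type*} [Zero E] (k : ℕ) (c : E) :
    ∀ᶠ n in atTop, (Pi.single k c : ℕ → E) n = 0 :=
  (eventually_gt_atTop k).mono fun _ hn => Pi.single_eq_of_ne (M := fun _ => E) hn.ne' c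

lemma innerW_single_one (k : ℕ) (z : ℕ → ℂ) : innerW (fun _ => 1) (Pi.single k 1) z = z k := by
  rw [innerW, tsum_eq_single k fun n hn => by simp [Pi.single_eq_of_ne hn]]
  simp

lemma isSelfAdjointW_jacobiAct_of_symmetric {a b : ℕ → ℝ}
    (hsymm : ∀ x ∈ DomW (fun _ => 1) (jacobiAct a b), ∀ y ∈ DomW (fun _ => 1) (jacobiAct a b),
      innerW (fun _ => 1) (jacobiAct a b x) y = innerW (fun _ => 1) x (jacobiAct a b y)) :
    IsSelfAdjointW (fun _ => 1) (jacobiAct a b) := by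
  refine fun y z hy hz => ⟨fun hyz => ?_, ?_⟩
  · have hJy : jacobiAct a b y = z := by
      ext k
      have hk := eventually_single_eq_zero k (1 : ℂ)
      calc jacobiAct a b y k
          = innerW (fun _ => 1) (Pi.single k 1) (jacobiAct a b y) := (innerW_single_one k _).symm
        _ = innerW (fun _ => 1) (jacobiAct a b (Pi.single k 1)) y :=
            (innerW_jacobiAct_comm_of_eventually_eq_zero a b hk y).symm
        _ = innerW (fun _ => 1) (Pi.single k 1) z :=
            hyz _ (mem_domW_jacobiAct_of_eventually_eq_zero a b hk)
        _ = z k := innerW_single_one k z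
    exact ⟨⟨hy, hJy ▸ hz⟩, hJy⟩
  · rintro ⟨hyDom, rfl⟩ x hx
    exact hsymm x hx y hyDom

theorem isSelfAdjointW_jacobiAct_of_not_memL2w {a b : ℕ → ℝ} {μ : ℂ} {u : ℕ → ℂ}
    (hu : SatisfiesRecurrence a b μ u) (hu2 : ¬ MemL2w (fun _ => 1) u) :
    IsSelfAdjointW (fun _ => 1) (jacobiAct a b) :=
  isSelfAdjointW_jacobiAct_of_symmetric fun _ hx _ hy =>
    innerW_jacobiAct_comm_of_not_memL2w hu hu2 hx hy

/-! ### Generalized eigenvectors -/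

/-- The solution of the recurrence in `IsGenEig` with initial values `u 0 = 0` and `u 1 = 1`, a
witness that generalized eigenvectors exist. Meaningful only if `a` does not vanish, because of the
division by `a (n + 1)`. -/
def dirichletSolution (a b : ℕ → ℝ) (lam : ℝ) : ℕ → ℝ
  | 0 => 0
  | 1 => 1
  | n + 2 => ((lam - b (n + 1)) * dirichletSolution a b lam (n + 1) -
      a n * dirichletSolution a b lam n) / a (n + 1)

section

variable {a b : ℕ → ℝ} {lam : ℝ}

lemma isGenEig_dirichletSolution (ha : ∀ n, a n ≠ 0) (b : ℕ → ℝ) (lam : ℝ) :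
    IsGenEig a b lam (dirichletSolution a b lam) := by
  refine ⟨by simp [dirichletSolution], fun n => ?_⟩
  rw [dirichletSolution, mul_div_cancel₀ _ (ha (n + 1))]

lemma isGenEig_iff_satisfiesRecurrence {u : ℕ → ℝ} : IsGenEig a b lam u ↔
    ¬(u 0 = 0 ∧ u 1 = 0) ∧ SatisfiesRecurrence a b lam (fun n => u n) := by
  refine and_congr_right fun _ => forall_congr' fun n => ?_
  simp only [jacobiAct]
  norm_cast
  constructor <;> intro h <;> linarith only [h]

namespace SatisfiesRecurrence

lemma re {x : ℕ → ℂ} (hx : SatisfiesRecurrence a b lam x) :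
    SatisfiesRecurrence a b lam fun n => ((x n).re : ℂ) := fun n => by
  have hre := congrArg Complex.re (hx n)
  apply Complex.ext
  · simpa [jacobiAct] using hre
  · simp [jacobiAct]

lemma im {x : ℕ → ℂ} (hx : SatisfiesRecurrence a b lam x) :
    SatisfiesRecurrence a b lam fun n => ((x n).im : ℂ) := fun n => by
  have him := congrArg Complex.im (hx n)
  apply Complex.ext
  · simpa [jacobiAct] using him
  · simp [jacobiAct]

lemma eq_zero_of_initial_eq_zero {μ : ℂ} {x : ℕ → ℂ} (ha : ∀ n, a n ≠ 0)
    (hx : SatisfiesRecurrence a b μ x) (h0 : x 0 = 0) (h1 : x 1 = 0) : x = 0 := by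
  have hpair (n : ℕ) : x n = 0 ∧ x (n + 1) = 0 := by
    induction n with
    | zero => exact ⟨h0, h1⟩
    | succ n ih =>
      have := hx n
      simp only [jacobiAct, ih.1, ih.2, mul_zero, zero_add, mul_eq_zero, Complex.ofReal_eq_zero,
        ha (n + 1), false_or] at this
      exact ⟨ih.2, this⟩
  exact funext fun n => (hpair n).1

lemma eq_zero_of_memL2w (ha : ∀ n, a n ≠ 0)
    (h : ∀ u : ℕ → ℝ, IsGenEig a b lam u → ¬ Summable fun n => u n ^ 2) {x : ℕ → ℂ}
    (hx : SatisfiesRecurrence a b lam x) (hx2 : MemL2w (fun _ => 1) x) : x = 0 := by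
  have initial_eq_zero {u : ℕ → ℝ} (hu : SatisfiesRecurrence a b lam fun n => (u n : ℂ))
      (hle : ∀ n, |u n| ≤ ‖x n‖) : u 0 = 0 ∧ u 1 = 0 := by
    by_contra hne
    have hu2 : MemL2w (fun _ => 1) fun n => (u n : ℂ) := memL2w_one_iff_memℓp.2 <|
      (memL2w_one_iff_memℓp.1 hx2).mono' fun n => by simpa using hle n
    exact h u (isGenEig_iff_satisfiesRecurrence.2 ⟨hne, hu⟩) (memL2w_one_ofReal_iff.1 hu2)
  obtain ⟨re0, re1⟩ := initial_eq_zero hx.re fun n => Complex.abs_re_le_norm (x n)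
  obtain ⟨im0, im1⟩ := initial_eq_zero hx.im fun n => Complex.abs_im_le_norm (x n)
  exact hx.eq_zero_of_initial_eq_zero ha (Complex.ext re0 im0) (Complex.ext re1 im1)

end SatisfiesRecurrence

end

theorem jacobi_selfAdjoint_of_genEigenvectors_not_l2_general
    (a b : ℕ → ℝ) (ha : ∀ n, a n ≠ 0) (lam : ℝ)
    (h : ∀ u : ℕ → ℝ, IsGenEig a b lam u → ¬ Summable fun n => u n ^ 2) :
    IsSelfAdjointW (fun _ => 1) (jacobiAct a b) ∧
    (lam : ℂ) ∉ eigenW (fun _ => 1) (jacobiAct a b) ∧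
    (lam : ℂ) ∈ spectrumW (fun _ => 1) (jacobiAct a b) := by
  refine ⟨?selfAdjoint, ?notEigenvalue, ?memSpectrum⟩
  case selfAdjoint =>
    have hu := isGenEig_dirichletSolution ha b lam
    exact isSelfAdjointW_jacobiAct_of_not_memL2w (isGenEig_iff_satisfiesRecurrence.1 hu).2
      (memL2w_one_ofReal_iff.not.2 (h _ hu))
  case notEigenvalue =>
    rintro ⟨x, hx, hne, hJx⟩
    exact hne (SatisfiesRecurrence.eq_zero_of_memL2w ha h (fun n => congrFun hJx (n + 1)) hx.1)
  case memSpectrum =>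
    rintro ⟨-, hsurj⟩
    obtain ⟨x, hx, hxe⟩ := hsurj (Pi.single 0 1)
      (memL2w_one_of_eventually_eq_zero (eventually_single_eq_zero 0 1))
    have hrec : SatisfiesRecurrence a b lam x := fun n =>
      sub_eq_zero.1 (by simpa using congrFun hxe (n + 1))
    obtain rfl : x = 0 := hrec.eq_zero_of_memL2w ha h hx.1
    simpa [jacobiAct] using congrFun hxe 0

/-- Proposition 1: if no generalized eigenvector associated with `lam` is square-summable,
then the Jacobi matrix is self-adjoint, `lam` is not an eigenvalue, and `lam` belongs to
the spectrum. -/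
theorem jacobi_selfAdjoint_of_genEigenvectors_not_l2
    (a b : ℕ → ℝ) (ha : ∀ n, 0 < a n) (lam : ℝ)
    (h : ∀ u : ℕ → ℝ, IsGenEig a b lam u → ¬ Summable fun n => u n ^ 2) :
    IsSelfAdjointW (fun _ => 1) (jacobiAct a b) ∧
    (lam : ℂ) ∉ eigenW (fun _ => 1) (jacobiAct a b) ∧
    (lam : ℂ) ∈ spectrumW (fun _ => 1) (jacobiAct a b) :=
  jacobi_selfAdjoint_of_genEigenvectors_not_l2_general a b (fun n => (ha n).ne') lam h
end
end
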